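/- arXiv:1710.05161 — 2 statements merged into one kernel-verified Lean document; each statement's English description precedes it below -/
import Mathlib

section
/- Let C be a coalgebra over a field K and let σ, τ : C × C → K be bilinear forms. Define δ_σ(c⊗d) = c₁σ(c₂, d) − σ(c, d₁)d₂, δ_τ(c⊗d) = c₁τ(c₂, d) − τ(c, d₁)d₂, and cd = μ(c⊗d) = c₁σ(c₂, d) − τ(c, d₁)d₂. Then (C, δ_σ, δ_τ, μ) is a coquasitriangular covariant bialgebra (i.e. (σ, τ) is a coassociative Yang-Baxter pair on C) if and only if, for all c, d, e ∈ C: σ(c, de) = σ(c₁, e)σ(c₂, d) and τ(cd, e) = −τ(d, e₁)τ(c, e₂), where de and cd denote μ(d⊗e) and μ(c⊗d). -/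
open TensorProduct

noncomputable section

variable {K : Type*} [Field K] {C : Type*} [AddCommGroup C] [Module K C]

/-- Coassociativity of a comultiplication (no counit assumed). -/
def Coassoc (Δ : C →ₗ[K] C ⊗[K] C) : Prop :=
  ∀ c : C, (TensorProduct.assoc K C C C) (TensorProduct.map Δ LinearMap.id (Δ c)) =
    TensorProduct.map LinearMap.id Δ (Δ c)

/-- Rota-Baxter cosystem conditions. -/
def IsRBCosystem (Δ : C →ₗ[K] C ⊗[K] C) (Q T : C →ₗ[K] C) : Prop :=
  (∀ c : C, TensorProduct.map Q Q (Δ c) =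
      TensorProduct.map Q LinearMap.id (Δ (Q c)) +
      TensorProduct.map LinearMap.id T (Δ (Q c))) ∧
  (∀ c : C, TensorProduct.map T T (Δ c) =
      TensorProduct.map Q LinearMap.id (Δ (T c)) +
      TensorProduct.map LinearMap.id T (Δ (T c)))

/-- Non-degeneracy of a coalgebra. -/
def Nondegenerate (Δ : C →ₗ[K] C ⊗[K] C) : Prop :=
  ∀ f : C →ₗ[K] C,
    ((∀ c : C, TensorProduct.map LinearMap.id f (Δ c) = 0) ∨
     (∀ c : C, TensorProduct.map f LinearMap.id (Δ c) = 0)) → f = 0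

/-- `pairApply f g (x ⊗ y) = f x * g y`. -/
def pairApply (f g : C →ₗ[K] K) : C ⊗[K] C →ₗ[K] K :=
  TensorProduct.lift ((LinearMap.mul K K).compl₁₂ f g)

/-- Coassociative Yang–Baxter pair. -/
def IsCYBP (Δ : C →ₗ[K] C ⊗[K] C) (σ τ : C →ₗ[K] C →ₗ[K] K) : Prop :=
  (∀ c d e : C, pairApply (σ.flip e) (σ.flip d) (Δ c)
      - pairApply (σ c) (σ.flip e) (Δ d) + pairApply (τ d) (σ c) (Δ e) = 0) ∧
  (∀ c d e : C, pairApply (τ.flip e) (σ.flip d) (Δ c)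
      - pairApply (τ c) (τ.flip e) (Δ d) + pairApply (τ d) (τ c) (Δ e) = 0)

/-- Swap of the first two tensor factors of `C ⊗ (C ⊗ C)`. -/
def swapFirstTwo : C ⊗[K] (C ⊗[K] C) →ₗ[K] C ⊗[K] (C ⊗[K] C) :=
  (TensorProduct.assoc K C C C).toLinearMap ∘ₗ
    LinearMap.rTensor C (TensorProduct.comm K C C).toLinearMap ∘ₗ
    (TensorProduct.assoc K C C C).symm.toLinearMap

/-- `contract13 σ (x ⊗ (y ⊗ z)) = σ x z • y`. -/
def contract13 (σ : C →ₗ[K] C →ₗ[K] K) : C ⊗[K] (C ⊗[K] C) →ₗ[K] C :=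
  (TensorProduct.rid K C).toLinearMap ∘ₗ
    LinearMap.lTensor C (TensorProduct.lift σ) ∘ₗ swapFirstTwo

/-- `muForm Δ σ τ (c ⊗ d) = σ(c₂,d) • c₁ − τ(c,d₁) • d₂`. -/
def muForm (Δ : C →ₗ[K] C ⊗[K] C) (σ τ : C →ₗ[K] C →ₗ[K] K) :
    C ⊗[K] C →ₗ[K] C :=
  ((TensorProduct.rid K C).toLinearMap ∘ₗ
      LinearMap.lTensor C (TensorProduct.lift σ) ∘ₗ
      (TensorProduct.assoc K C C C).toLinearMap ∘ₗ LinearMap.rTensor C Δ)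
  - ((TensorProduct.lid K C).toLinearMap ∘ₗ
      LinearMap.rTensor C (TensorProduct.lift τ) ∘ₗ
      (TensorProduct.assoc K C C C).symm.toLinearMap ∘ₗ LinearMap.lTensor C Δ)

/-- Coderivation condition for a multiplication-like map on a coalgebra. -/
def IsCoderivation (Δ : C →ₗ[K] C ⊗[K] C) (δ : C ⊗[K] C →ₗ[K] C) : Prop :=
  ∀ c d : C, Δ (δ (c ⊗ₜ d)) =
    LinearMap.lTensor C (δ ∘ₗ (TensorProduct.mk K C C).flip d) (Δ c) +
    LinearMap.rTensor C (δ ∘ₗ TensorProduct.mk K C C c) (Δ d)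

/-- Covariant coderivation with respect to `(δ₁, δ₂)`. -/
def IsCovariant (Δ : C →ₗ[K] C ⊗[K] C) (δ₁ δ₂ μ : C ⊗[K] C →ₗ[K] C) : Prop :=
  (∀ c d : C, Δ (μ (c ⊗ₜ d)) =
      LinearMap.rTensor C (μ ∘ₗ TensorProduct.mk K C C c) (Δ d) +
      LinearMap.lTensor C (δ₁ ∘ₗ (TensorProduct.mk K C C).flip d) (Δ c)) ∧
  (∀ c d : C, Δ (μ (c ⊗ₜ d)) =
      LinearMap.lTensor C (μ ∘ₗ (TensorProduct.mk K C C).flip d) (Δ c) +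
      LinearMap.rTensor C (δ₂ ∘ₗ TensorProduct.mk K C C c) (Δ d))

/-- Associativity of a multiplication `μ : C ⊗ C →ₗ C`. -/
def IsAssocMul (μ : C ⊗[K] C →ₗ[K] C) : Prop :=
  ∀ c d e : C, μ (μ (c ⊗ₜ d) ⊗ₜ e) = μ (c ⊗ₜ μ (d ⊗ₜ e))

/-- Counit condition. -/
def IsCounit (Δ : C →ₗ[K] C ⊗[K] C) (ε : C →ₗ[K] K) : Prop :=
  ∀ c : C, (TensorProduct.lid K C) (TensorProduct.map ε LinearMap.id (Δ c)) = c ∧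
    (TensorProduct.rid K C) (TensorProduct.map LinearMap.id ε (Δ c)) = c

/-- Dendriform coalgebra conditions for `(Δr, Δl) = (Δ_≻, Δ_≺)`. -/
def IsDendriformCoalgebra (Δr Δl : C →ₗ[K] C ⊗[K] C) : Prop :=
  (∀ c : C, (TensorProduct.assoc K C C C) (TensorProduct.map Δr LinearMap.id (Δr c)) =
      TensorProduct.map LinearMap.id Δr (Δr c) + TensorProduct.map LinearMap.id Δl (Δr c)) ∧
  (∀ c : C, (TensorProduct.assoc K C C C) (TensorProduct.map Δl LinearMap.id (Δr c)) =
      TensorProduct.map LinearMap.id Δr (Δl c)) ∧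
  (∀ c : C, (TensorProduct.assoc K C C C) (TensorProduct.map Δr LinearMap.id (Δl c)) +
      (TensorProduct.assoc K C C C) (TensorProduct.map Δl LinearMap.id (Δl c)) =
      TensorProduct.map LinearMap.id Δl (Δl c))

/-- The conditions on the bilinear form `u` in Theorem 4.11. -/
def UCond (Δ : C →ₗ[K] C ⊗[K] C) (δ₁ δ₂ : C ⊗[K] C →ₗ[K] C)
    (u : C →ₗ[K] C →ₗ[K] K) : Prop :=
  (∀ c d : C, δ₁ (c ⊗ₜ d) - δ₂ (c ⊗ₜ d) =
      (TensorProduct.rid K C) (LinearMap.lTensor C (u.flip d) (Δ c)) -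
      (TensorProduct.lid K C) (LinearMap.rTensor C (u c) (Δ d))) ∧
  (∀ c d e : C, δ₁ (δ₁ (c ⊗ₜ d) ⊗ₜ e) - δ₁ (c ⊗ₜ δ₁ (d ⊗ₜ e)) =
      (TensorProduct.lid K C)
        (TensorProduct.map (u d) (δ₁ ∘ₗ TensorProduct.mk K C C c) (Δ e))) ∧
  (∀ c d e : C, u (δ₁ (c ⊗ₜ d)) e - u c (δ₁ (d ⊗ₜ e)) =
      pairApply (u d) (u c) (Δ e) - pairApply (u c) (u.flip e) (Δ d))

section TensorContraction

variable {R M N P Q : Type*} [CommSemiring R]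
  [AddCommMonoid M] [AddCommMonoid N] [AddCommMonoid P] [AddCommMonoid Q]
  [Module R M] [Module R N] [Module R P] [Module R Q]

theorem lTensor_lift_assoc_tmul (β : N →ₗ[R] P →ₗ[R] Q) (x : M ⊗[R] N) (p : P) :
    (lift β).lTensor M (TensorProduct.assoc R M N P (x ⊗ₜ p)) = (β.flip p).lTensor M x := by
  induction x with
  | zero => simp
  | tmul m n => simp
  | add x y hx hy => simp only [add_tmul, map_add, hx, hy]

theorem rTensor_lift_assoc_symm_tmul (β : M →ₗ[R] N →ₗ[R] Q) (m : M) (x : N ⊗[R] P) :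
    (lift β).rTensor P ((TensorProduct.assoc R M N P).symm (m ⊗ₜ x)) = (β m).rTensor P x := by
  induction x with
  | zero => simp
  | tmul n p => simp
  | add x y hx hy => simp only [tmul_add, map_add, hx, hy]

end TensorContraction

theorem pairApply_tmul (f g : C →ₗ[K] K) (x y : C) : pairApply f g (x ⊗ₜ y) = f x * g y := rfl

theorem apply_rid_lTensor (f g : C →ₗ[K] K) (x : C ⊗[K] C) :
    f (TensorProduct.rid K C (g.lTensor C x)) = pairApply f g x := by
  induction x with
  | zero => simp
  | tmul a b => simp [pairApply_tmul, mul_comm]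
  | add x y hx hy => simp only [map_add, hx, hy]

theorem apply_lid_rTensor (f g : C →ₗ[K] K) (x : C ⊗[K] C) :
    g (TensorProduct.lid K C (f.rTensor C x)) = pairApply f g x := by
  induction x with
  | zero => simp
  | tmul a b => simp [pairApply_tmul]
  | add x y hx hy => simp only [map_add, hx, hy]

section MuForm

variable (Δ : C →ₗ[K] C ⊗[K] C) (σ τ : C →ₗ[K] C →ₗ[K] K)

theorem muForm_tmul (c d : C) :
    muForm Δ σ τ (c ⊗ₜ d) =
      TensorProduct.rid K C ((σ.flip d).lTensor C (Δ c)) -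
        TensorProduct.lid K C ((τ c).rTensor C (Δ d)) := by
  simp [muForm, lTensor_lift_assoc_tmul, rTensor_lift_assoc_symm_tmul]

/-- With `f = σ(c, ·)` and `f = τ(·, e)` the right-hand side supplies the two terms by which each
multiplicativity condition differs from a Yang–Baxter equation. -/
theorem apply_muForm_tmul (f : C →ₗ[K] K) (c d : C) :
    f (muForm Δ σ τ (c ⊗ₜ d)) =
      pairApply f (σ.flip d) (Δ c) - pairApply (τ c) f (Δ d) := by
  rw [muForm_tmul, map_sub, apply_rid_lTensor, apply_lid_rTensor]

theorem sigma_muForm_eq_iff (c d e : C) :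
    σ c (muForm Δ σ τ (d ⊗ₜ e)) = pairApply (σ.flip e) (σ.flip d) (Δ c) ↔
      pairApply (σ.flip e) (σ.flip d) (Δ c) - pairApply (σ c) (σ.flip e) (Δ d) +
        pairApply (τ d) (σ c) (Δ e) = 0 := by
  rw [apply_muForm_tmul, eq_comm, ← sub_eq_zero, ← sub_add]

theorem tau_muForm_eq_iff (c d e : C) :
    τ (muForm Δ σ τ (c ⊗ₜ d)) e = -pairApply (τ d) (τ c) (Δ e) ↔
      pairApply (τ.flip e) (σ.flip d) (Δ c) - pairApply (τ c) (τ.flip e) (Δ d) +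
        pairApply (τ d) (τ c) (Δ e) = 0 := by
  rw [← τ.flip_apply, apply_muForm_tmul, eq_neg_iff_add_eq_zero]

theorem cybp_iff_multiplicativity_general :
    IsCYBP Δ σ τ ↔
      ∀ c d e : C,
        σ c (muForm Δ σ τ (d ⊗ₜ e)) = pairApply (σ.flip e) (σ.flip d) (Δ c) ∧
        τ (muForm Δ σ τ (c ⊗ₜ d)) e = - pairApply (τ d) (τ c) (Δ e) := by
  simp only [IsCYBP, sigma_muForm_eq_iff, tau_muForm_eq_iff, forall_and]

end MuForm

/-- Proposition 5.3: `(σ, τ)` is a coassociative Yang-Baxter pair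
iff `σ(c, de) = σ(c₁,e)σ(c₂,d)` and `τ(cd, e) = −τ(d,e₁)τ(c,e₂)`. -/
theorem cybp_iff_multiplicativity
    (Δ : C →ₗ[K] C ⊗[K] C) (hΔ : Coassoc Δ)
    (σ τ : C →ₗ[K] C →ₗ[K] K) :
    IsCYBP Δ σ τ ↔
      ∀ c d e : C,
        σ c (muForm Δ σ τ (d ⊗ₜ e)) = pairApply (σ.flip e) (σ.flip d) (Δ c) ∧
        τ (muForm Δ σ τ (c ⊗ₜ d)) e = - pairApply (τ d) (τ c) (Δ e) :=
  cybp_iff_multiplicativity_general Δ σ τ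

end
end

section
/- Let (σ, τ) be a coassociative Yang-Baxter pair on a coalgebra C over a field K, with associated product cd = μ(c⊗d) = c₁σ(c₂, d) − τ(c, d₁)d₂ and coderivation δ_σ(c⊗d) = c₁σ(c₂, d) − σ(c, d₁)d₂. Let M be a right C-comodule with coaction ρ : M → M⊗C, ρ(m) = m₍₀₎ ⊗ m₍₁₎, and define the action m ⊳ c = m₍₀₎ σ(m₍₁₎, c). Then (i) the action is associative with respect to μ: m ⊳ (cd) = (m ⊳ c) ⊳ d for all m ∈ M, c, d ∈ C; and (ii) the action is a right covariant coderivation with respect to δ_σ: ρ(m ⊳ c) = (m ⊳ c₁) ⊗ c₂ + m₍₀₎ ⊗ δ_σ(m₍₁₎ ⊗ c) for all m ∈ M, c ∈ C. -/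
open TensorProduct

noncomputable section

variable {K : Type*} [Field K] {C : Type*} [AddCommGroup C] [Module K C]

/-!
Both halves of `cd = c₁σ(c₂, d) − τ(c, d₁)d₂` are actions induced by coactions: the first is the
right action `c ⊳ d` of the regular comodule `C`, the second its left-handed analogue.
Coassociativity of `ρ` says that `ρ(m ⊳ c) = m₍₀₎ ⊗ (m₍₁₎ ⊳ c)`. Covariance follows by adding and
subtracting `m₍₀₎ ⊗ σ(m₍₁₎, c₁)c₂ = (m ⊳ c₁) ⊗ c₂`. The first Yang–Baxter equation is
`σ(c ⊳ d, e) = σ(c, de)`, hence `(m ⊳ c) ⊳ d = m₍₀₎σ(m₍₁₎ ⊳ c, d) = m₍₀₎σ(m₍₁₎, cd) = m ⊳ (cd)`.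
-/

section InducedAction

variable {R : Type*} [CommSemiring R] {D E M N : Type*}
  [AddCommMonoid D] [Module R D] [AddCommMonoid E] [Module R E]
  [AddCommMonoid M] [Module R M] [AddCommMonoid N] [Module R N]

/-- The slice map contracting the right tensor factor against a linear form, `m ⊗ d ↦ f(d) m`;
it is kept linear in the form as well, so that bilinear forms can be composed with it. -/
def rightSlice : (D →ₗ[R] R) →ₗ[R] M ⊗[R] D →ₗ[R] M :=
  (LinearMap.lTensorHom M).compr₂ (TensorProduct.rid R M).toLinearMap

/-- The slice map contracting the left tensor factor against a linear form, `d ⊗ m ↦ f(d) m`. -/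
def leftSlice : (D →ₗ[R] R) →ₗ[R] D ⊗[R] M →ₗ[R] M :=
  (LinearMap.rTensorHom M).compr₂ (TensorProduct.lid R M).toLinearMap

@[simp]
theorem rightSlice_tmul (f : D →ₗ[R] R) (m : M) (d : D) :
    rightSlice f (m ⊗ₜ[R] d) = f d • m := by
  simp [rightSlice]

@[simp]
theorem leftSlice_tmul (f : D →ₗ[R] R) (d : D) (m : M) :
    leftSlice f (d ⊗ₜ[R] m) = f d • m := by
  simp [leftSlice]

theorem map_rightSlice (g : M →ₗ[R] N) (f : D →ₗ[R] R) (t : M ⊗[R] D) :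
    g (rightSlice f t) = rightSlice f (LinearMap.rTensor D g t) := by
  induction t with
  | zero => simp
  | tmul m d => simp
  | add s t hs ht => simp only [map_add, hs, ht]

theorem rightSlice_lTensor (f : E →ₗ[R] R) (g : D →ₗ[R] E) (t : M ⊗[R] D) :
    rightSlice f (LinearMap.lTensor M g t) = rightSlice (f ∘ₗ g) t := by
  induction t with
  | zero => simp
  | tmul m d => simp
  | add s t hs ht => simp only [map_add, hs, ht]

theorem rightSlice_eq_lTensor_assoc (f : E →ₗ[R] R) (t : (M ⊗[R] D) ⊗[R] E) :
    rightSlice f t =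
      LinearMap.lTensor M (rightSlice f) (TensorProduct.assoc R M D E t) := by
  suffices rightSlice f = LinearMap.lTensor M (rightSlice f) ∘ₗ
      (TensorProduct.assoc R M D E).toLinearMap from LinearMap.congr_fun this t
  ext m d e
  simp

theorem rTensor_rightSlice_eq_lTensor_leftSlice (σ : D →ₗ[R] E →ₗ[R] R)
    (t : M ⊗[R] D) (s : E ⊗[R] N) :
    LinearMap.rTensor N ((rightSlice ∘ₗ σ.flip).flip t) s =
      LinearMap.lTensor M ((leftSlice ∘ₗ σ).flip s) t := by
  induction t with
  | zero => simp
  | tmul m d =>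
    induction s with
    | zero => simp
    | tmul e n => simp [TensorProduct.smul_tmul]
    | add s s' hs hs' => simp only [map_add, hs, hs', LinearMap.lTensor_tmul,
        TensorProduct.tmul_add, LinearMap.add_apply]
  | add t t' ht ht' => simp only [map_add, ht, ht', LinearMap.rTensor_add, LinearMap.add_apply]

/-- The right action `m ⊳ c = m₍₀₎σ(m₍₁₎, c)` induced by a coaction `ρ` and a bilinear form `σ`. -/
def rightAction (σ : D →ₗ[R] E →ₗ[R] R) (ρ : M →ₗ[R] M ⊗[R] D) : M ⊗[R] E →ₗ[R] M :=
  (TensorProduct.rid R M).toLinearMap ∘ₗ LinearMap.lTensor M (TensorProduct.lift σ) ∘ₗ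
    (TensorProduct.assoc R M D E).toLinearMap ∘ₗ LinearMap.rTensor E ρ

/-- The left action `c ⊗ n ↦ τ(c, n₍₋₁₎)n₍₀₎` induced by a left coaction `ν` and a bilinear form
`τ`. -/
def leftAction (τ : D →ₗ[R] E →ₗ[R] R) (ν : N →ₗ[R] E ⊗[R] N) : D ⊗[R] N →ₗ[R] N :=
  (TensorProduct.lid R N).toLinearMap ∘ₗ LinearMap.rTensor N (TensorProduct.lift τ) ∘ₗ
    (TensorProduct.assoc R D E N).symm.toLinearMap ∘ₗ LinearMap.lTensor D ν

theorem rightAction_tmul (σ : D →ₗ[R] E →ₗ[R] R) (ρ : M →ₗ[R] M ⊗[R] D) (m : M) (e : E) :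
    rightAction σ ρ (m ⊗ₜ e) = rightSlice (σ.flip e) (ρ m) := by
  simp only [rightAction, LinearMap.comp_apply, LinearEquiv.coe_coe, LinearMap.rTensor_tmul]
  induction ρ m with
  | zero => simp
  | tmul m d => simp
  | add s t hs ht => simp only [TensorProduct.add_tmul, map_add, hs, ht]

theorem leftAction_tmul (τ : D →ₗ[R] E →ₗ[R] R) (ν : N →ₗ[R] E ⊗[R] N) (d : D) (n : N) :
    leftAction τ ν (d ⊗ₜ n) = leftSlice (τ d) (ν n) := by
  simp only [leftAction, LinearMap.comp_apply, LinearEquiv.coe_coe, LinearMap.lTensor_tmul]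
  induction ν n with
  | zero => simp
  | tmul e n => simp
  | add s t hs ht => simp only [TensorProduct.tmul_add, map_add, hs, ht]

theorem rTensor_rightAction_eq_lTensor_leftAction (σ : D →ₗ[R] E →ₗ[R] R)
    (ρ : M →ₗ[R] M ⊗[R] D) (ν : N →ₗ[R] E ⊗[R] N) (m : M) (n : N) :
    LinearMap.rTensor N (rightAction σ ρ ∘ₗ TensorProduct.mk R M E m) (ν n) =
      LinearMap.lTensor M (leftAction σ ν ∘ₗ (TensorProduct.mk R D N).flip n) (ρ m) := by
  have right_eq : rightAction σ ρ ∘ₗ TensorProduct.mk R M E m =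
      (rightSlice ∘ₗ σ.flip).flip (ρ m) :=
    LinearMap.ext fun e => rightAction_tmul σ ρ m e
  have left_eq : leftAction σ ν ∘ₗ (TensorProduct.mk R D N).flip n =
      (leftSlice ∘ₗ σ).flip (ν n) :=
    LinearMap.ext fun d => leftAction_tmul σ ν d n
  rw [right_eq, left_eq, rTensor_rightSlice_eq_lTensor_leftSlice]

/-- The coassociativity law `(ρ ⊗ id) ∘ ρ = (id ⊗ Δ) ∘ ρ` of a right comodule. -/
def IsRightCoaction (Δ : D →ₗ[R] D ⊗[R] D) (ρ : M →ₗ[R] M ⊗[R] D) : Prop :=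
  ∀ m : M, TensorProduct.assoc R M D D (LinearMap.rTensor D ρ (ρ m)) =
    LinearMap.lTensor M Δ (ρ m)

namespace IsRightCoaction

variable {Δ : D →ₗ[R] D ⊗[R] D} {ρ : M →ₗ[R] M ⊗[R] D}

theorem coaction_rightAction (hρ : IsRightCoaction Δ ρ) (σ : D →ₗ[R] E →ₗ[R] R) (m : M) (e : E) :
    ρ (rightAction σ ρ (m ⊗ₜ e)) =
      LinearMap.lTensor M (rightAction σ Δ ∘ₗ (TensorProduct.mk R D E).flip e) (ρ m) := by
  have regular_eq : rightAction σ Δ ∘ₗ (TensorProduct.mk R D E).flip e =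
      rightSlice (σ.flip e) ∘ₗ Δ :=
    LinearMap.ext fun d => rightAction_tmul σ Δ d e
  rw [rightAction_tmul, map_rightSlice, rightSlice_eq_lTensor_assoc, hρ,
    ← LinearMap.lTensor_comp_apply, regular_eq]

theorem rightAction_rightAction (hρ : IsRightCoaction Δ ρ) (σ : D →ₗ[R] E →ₗ[R] R)
    {a b e : E} (h : ∀ d : D, σ (rightAction σ Δ (d ⊗ₜ a)) b = σ d e) (m : M) :
    rightAction σ ρ (rightAction σ ρ (m ⊗ₜ a) ⊗ₜ b) = rightAction σ ρ (m ⊗ₜ e) := by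
  have form_eq : σ.flip b ∘ₗ rightAction σ Δ ∘ₗ (TensorProduct.mk R D E).flip a = σ.flip e :=
    LinearMap.ext h
  rw [rightAction_tmul, hρ.coaction_rightAction, rightSlice_lTensor, form_eq, rightAction_tmul]

end IsRightCoaction

end InducedAction

section YangBaxterProduct

variable {R : Type*} [CommRing R] {D M : Type*} [AddCommGroup D] [Module R D]
  [AddCommMonoid M] [Module R M]

/-- The product `cd = c₁σ(c₂, d) − τ(c, d₁)d₂` over a commutative ring; over a field it is `muForm`
by definition. For `τ = σ` it is the coderivation `δ_σ`. -/
def yangBaxterProduct (Δ : D →ₗ[R] D ⊗[R] D) (σ τ : D →ₗ[R] D →ₗ[R] R) : D ⊗[R] D →ₗ[R] D :=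
  rightAction σ Δ - leftAction τ Δ

theorem IsRightCoaction.covariant_rightAction {Δ : D →ₗ[R] D ⊗[R] D} {ρ : M →ₗ[R] M ⊗[R] D}
    (hρ : IsRightCoaction Δ ρ) (σ : D →ₗ[R] D →ₗ[R] R) (m : M) (c : D) :
    ρ (rightAction σ ρ (m ⊗ₜ c)) =
      LinearMap.rTensor D (rightAction σ ρ ∘ₗ TensorProduct.mk R M D m) (Δ c) +
      LinearMap.lTensor M (yangBaxterProduct Δ σ σ ∘ₗ (TensorProduct.mk R D D).flip c) (ρ m) := by
  have split : leftAction σ Δ ∘ₗ (TensorProduct.mk R D D).flip c +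
      yangBaxterProduct Δ σ σ ∘ₗ (TensorProduct.mk R D D).flip c =
      rightAction σ Δ ∘ₗ (TensorProduct.mk R D D).flip c := by
    rw [← LinearMap.add_comp, yangBaxterProduct, add_sub_cancel]
  rw [rTensor_rightAction_eq_lTensor_leftAction, ← LinearMap.add_apply, ← LinearMap.lTensor_add,
    split, hρ.coaction_rightAction]

theorem right_comodule_is_covariant_module_general
    (Δ : D →ₗ[R] D ⊗[R] D) (σ τ : D →ₗ[R] D →ₗ[R] R)
    (h : ∀ c d e : D,
      σ (rightAction σ Δ (c ⊗ₜ d)) e = σ c (yangBaxterProduct Δ σ τ (d ⊗ₜ e)))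
    (ρ : M →ₗ[R] M ⊗[R] D) (hρ : IsRightCoaction Δ ρ) :
    (∀ (m : M) (c d : D),
      rightAction σ ρ (m ⊗ₜ yangBaxterProduct Δ σ τ (c ⊗ₜ d)) =
        rightAction σ ρ (rightAction σ ρ (m ⊗ₜ c) ⊗ₜ d)) ∧
    (∀ (m : M) (c : D), ρ (rightAction σ ρ (m ⊗ₜ c)) =
      LinearMap.rTensor D (rightAction σ ρ ∘ₗ TensorProduct.mk R M D m) (Δ c) +
      LinearMap.lTensor M (yangBaxterProduct Δ σ σ ∘ₗ (TensorProduct.mk R D D).flip c) (ρ m)) :=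
  ⟨fun m c d => (hρ.rightAction_rightAction σ (fun x => h x c d) m).symm,
    hρ.covariant_rightAction σ⟩

end YangBaxterProduct

theorem apply_rightSlice_eq_pairApply (f g : C →ₗ[K] K) (s : C ⊗[K] C) :
    f (rightSlice g s) = pairApply f g s := by
  induction s with
  | zero => simp
  | tmul c d => simp [pairApply, mul_comm]
  | add s t hs ht => simp only [map_add, hs, ht]

theorem apply_leftSlice_eq_pairApply (f g : C →ₗ[K] K) (s : C ⊗[K] C) :
    g (leftSlice f s) = pairApply f g s := by
  induction s with
  | zero => simp
  | tmul c d => simp [pairApply]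
  | add s t hs ht => simp only [map_add, hs, ht]

theorem IsCYBP.apply_rightAction {Δ : C →ₗ[K] C ⊗[K] C} {σ τ : C →ₗ[K] C →ₗ[K] K}
    (h : IsCYBP Δ σ τ) (c d e : C) :
    σ (rightAction σ Δ (c ⊗ₜ d)) e = σ c (yangBaxterProduct Δ σ τ (d ⊗ₜ e)) := by
  have left_eq : σ (rightAction σ Δ (c ⊗ₜ d)) e = pairApply (σ.flip e) (σ.flip d) (Δ c) := by
    rw [rightAction_tmul, ← LinearMap.flip_apply, apply_rightSlice_eq_pairApply]
  have right_eq : σ c (yangBaxterProduct Δ σ τ (d ⊗ₜ e)) =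
      pairApply (σ c) (σ.flip e) (Δ d) - pairApply (τ d) (σ c) (Δ e) := by
    rw [yangBaxterProduct, LinearMap.sub_apply, map_sub, rightAction_tmul, leftAction_tmul,
      apply_rightSlice_eq_pairApply, apply_leftSlice_eq_pairApply]
  rw [left_eq, right_eq]
  linear_combination h.1 c d e

/-- Example 5.19: every right comodule over a coquasitriangular
covariant bialgebra is a right covariant module via `m ⊳ c = m₍₀₎ σ(m₍₁₎, c)`. -/
theorem right_comodule_is_covariant_module
    {M : Type*} [AddCommGroup M] [Module K M]
    (Δ : C →ₗ[K] C ⊗[K] C) (hΔ : Coassoc Δ)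
    (σ τ : C →ₗ[K] C →ₗ[K] K) (h : IsCYBP Δ σ τ)
    (ρ : M →ₗ[K] M ⊗[K] C)
    (hρ : ∀ m : M, (TensorProduct.assoc K M C C) (LinearMap.rTensor C ρ (ρ m)) =
      LinearMap.lTensor M Δ (ρ m))
    (act : M ⊗[K] C →ₗ[K] M)
    (hact : act = (TensorProduct.rid K M).toLinearMap ∘ₗ
      LinearMap.lTensor M (TensorProduct.lift σ) ∘ₗ
      (TensorProduct.assoc K M C C).toLinearMap ∘ₗ LinearMap.rTensor C ρ) :
    (∀ (m : M) (c d : C),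
      act (m ⊗ₜ muForm Δ σ τ (c ⊗ₜ d)) = act (act (m ⊗ₜ c) ⊗ₜ d)) ∧
    (∀ (m : M) (c : C), ρ (act (m ⊗ₜ c)) =
        LinearMap.rTensor C (act ∘ₗ TensorProduct.mk K M C m) (Δ c) +
        LinearMap.lTensor M (muForm Δ σ σ ∘ₗ (TensorProduct.mk K C C).flip c) (ρ m)) := by
  subst hact
  exact right_comodule_is_covariant_module_general Δ σ τ h.apply_rightAction ρ hρ

end
end
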